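/- Let R ⊆ S₁ × S₂ and Q ⊆ S₂ × S₃ be ambiguous representations of continuous semilattices with zero. Then their composition R;Q is an ambiguous representation of S₁ in S₃, and for every x ∈ S₁ the cut x(R;Q) equals the Scott closure of the set xRQ = {z ∈ S₃ : there is y ∈ S₂ with (x,y) ∈ R and (y,z) ∈ Q}. -/

import Mathlib

/-- A dcpo: every nonempty directed subset has a least upper bound. -/
def IsDcpo (α : Type*) [PartialOrder α] : Prop :=
  ∀ D : Set α, D.Nonempty → DirectedOn (· ≤ ·) D → ∃ a : α, IsLUB D a

/-- Scott closed: a lower set closed under suprema of its (nonempty) directed subsets. -/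
def ScottClosed {α : Type*} [PartialOrder α] (A : Set α) : Prop :=
  IsLowerSet A ∧
    ∀ D : Set α, D ⊆ A → D.Nonempty → DirectedOn (· ≤ ·) D → ∀ a : α, IsLUB D a → a ∈ A

/-- Scott closure: the least Scott closed set containing `A`. -/
def scottClosure {α : Type*} [PartialOrder α] (A : Set α) : Set α :=
  ⋂₀ {C : Set α | ScottClosed C ∧ A ⊆ C}

/-- `x` is way below `y`. -/
def WayBelow {α : Type*} [PartialOrder α] (x y : α) : Prop :=
  ∀ D : Set α, D.Nonempty → DirectedOn (· ≤ ·) D → ∀ a : α, IsLUB D a → y ≤ a → ∃ d ∈ D, x ≤ d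

/-- A continuous (meet-)semilattice with zero: a dcpo meet-semilattice with bottom in which
every element is the directed supremum of the elements way below it. -/
def IsContinuousSemilattice (α : Type*) [SemilatticeInf α] [OrderBot α] : Prop :=
  IsDcpo α ∧
    ∀ y : α, DirectedOn (· ≤ ·) {x : α | WayBelow x y} ∧ IsLUB {x : α | WayBelow x y} y

/-- A compatibility `P : S × S' → {0,1}` (encoded with `Prop` as the two-element lattice,
`P x y` meaning `P(x,y) = 1`): it preserves binary meets in each variable separately,
sends pairs containing a bottom element to `0`, and is Scott continuous (preserves
suprema of nonempty directed subsets of the product). -/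
def IsCompatibility {S S' : Type*} [SemilatticeInf S] [OrderBot S]
    [SemilatticeInf S'] [OrderBot S'] (P : S → S' → Prop) : Prop :=
  (∀ x₁ x₂ y, P (x₁ ⊓ x₂) y ↔ P x₁ y ∧ P x₂ y) ∧
  (∀ x y₁ y₂, P x (y₁ ⊓ y₂) ↔ P x y₁ ∧ P x y₂) ∧
  (∀ y, ¬ P ⊥ y) ∧ (∀ x, ¬ P x ⊥) ∧
  (∀ D : Set (S × S'), D.Nonempty → DirectedOn (· ≤ ·) D → ∀ a : S × S', IsLUB D a →
    (P a.1 a.2 ↔ ∃ p ∈ D, P p.1 p.2))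

/-- A separating compatibility. -/
def IsSeparatingCompatibility {S S' : Type*} [SemilatticeInf S] [OrderBot S]
    [SemilatticeInf S'] [OrderBot S'] (P : S → S' → Prop) : Prop :=
  IsCompatibility P ∧
  (∀ x₁ x₂ : S, (∀ y, P x₁ y ↔ P x₂ y) → x₁ = x₂) ∧
  (∀ y₁ y₂ : S', (∀ x, P x y₁ ↔ P x y₂) → y₁ = y₂)

/-- Transversal of `A ⊆ S` w.r.t. a compatibility `P : S × S' → {0,1}`:
all `y ∈ S'` with `P(x,y) = 0` for every `x ∈ A`. -/
def transversal {S S' : Type*} (P : S → S' → Prop) (A : Set S) : Set S' :=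
  {y : S' | ∀ x ∈ A, ¬ P x y}

/-- A (crisp) ambiguous representation of `S₁` in `S₂`. -/
def AmbRep {S₁ S₂ : Type*} [PartialOrder S₁] [PartialOrder S₂] (R : Set (S₁ × S₂)) : Prop :=
  (∀ x : S₁, ({y : S₂ | (x, y) ∈ R}).Nonempty ∧ ScottClosed {y : S₂ | (x, y) ∈ R}) ∧
  (∀ y : S₂, IsUpperSet {x : S₁ | (x, y) ∈ R})

/-- The pseudo-inverse of a relation `R ⊆ S₁ × S₂` w.r.t. compatibilities
`P₁ : S₁ × T₁ → {0,1}` and `P₂ : S₂ × T₂ → {0,1}`. -/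
def psInv {S₁ S₂ T₁ T₂ : Type*} (P₁ : S₁ → T₁ → Prop) (P₂ : S₂ → T₂ → Prop)
    (R : Set (S₁ × S₂)) : Set (T₂ × T₁) :=
  {p : T₂ × T₁ | ∀ x : S₁, P₁ x p.2 → ∃ y : S₂, (x, y) ∈ R ∧ P₂ y p.1}

/-- Composition `R ; Q` of ambiguous representations. -/
def ambComp {S₁ S₂ S₃ : Type*} [PartialOrder S₃]
    (R : Set (S₁ × S₂)) (Q : Set (S₂ × S₃)) : Set (S₁ × S₃) :=
  {p : S₁ × S₃ | ∀ z' : S₃, WayBelow z' p.2 → ∃ y : S₂, (p.1, y) ∈ R ∧ (y, z') ∈ Q}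

/-- Pseudo-invertibility condition (c). -/
def PseudoInvertible {S₁ S₂ : Type*} [PartialOrder S₁] [PartialOrder S₂]
    (R : Set (S₁ × S₂)) : Prop :=
  ∀ x y, (x, y) ∈ R → ∀ y', WayBelow y' y → ∃ x', WayBelow x' x ∧ (x', y') ∈ R

/-- An `L`-fuzzy ambiguous representation of `S₁` in `S₂`. -/
def LAmbRep {S₁ S₂ L : Type*} [PartialOrder S₁] [PartialOrder S₂] [PartialOrder L]
    (R : Set (S₁ × S₂ × L)) : Prop :=
  (∀ (y : S₂) (α : L), IsUpperSet {x : S₁ | (x, y, α) ∈ R}) ∧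
  (∀ (x : S₁) (α : L),
    ({y : S₂ | (x, y, α) ∈ R}).Nonempty ∧ ScottClosed {y : S₂ | (x, y, α) ∈ R}) ∧
  (∀ (x : S₁) (y : S₂), ({α : L | (x, y, α) ∈ R}).Nonempty ∧
    DirectedOn (· ≤ ·) {α : L | (x, y, α) ∈ R} ∧ ScottClosed {α : L | (x, y, α) ∈ R})

/-- The `α`-cut of an `L`-fuzzy relation. -/
def lCut {S₁ S₂ L : Type*} (R : Set (S₁ × S₂ × L)) (α : L) : Set (S₁ × S₂) :=
  {p : S₁ × S₂ | (p.1, p.2, α) ∈ R}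

/-- The pseudo-inverse of an `L`-fuzzy ambiguous representation, given through its
`α`-cuts: `(R⊤)_α = ⋂_{β ≪ α} (R_β)⊤`. -/
def lpsInv {S₁ S₂ T₁ T₂ L : Type*} [PartialOrder L]
    (P₁ : S₁ → T₁ → Prop) (P₂ : S₂ → T₂ → Prop) (R : Set (S₁ × S₂ × L)) :
    Set (T₂ × T₁ × L) :=
  {p : T₂ × T₁ × L | ∀ β : L, WayBelow β p.2.2 → (p.1, p.2.1) ∈ psInv P₁ P₂ (lCut R β)}

/-- Pseudo-invertibility condition (d) for `L`-fuzzy ambiguous representations. -/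
def LPseudoInvertible {S₁ S₂ L : Type*} [PartialOrder S₁] [PartialOrder S₂] [PartialOrder L]
    (R : Set (S₁ × S₂ × L)) : Prop :=
  ∀ x y α, (x, y, α) ∈ R → ∀ y', WayBelow y' y → ∀ α', WayBelow α' α →
    ∃ x', WayBelow x' x ∧ (x', y', α') ∈ R

/-- A unital quantale structure on a complete lattice: an associative multiplication
distributing over arbitrary suprema in each variable, with the top element as two-sided
unit. -/
def IsQuantaleMul {L : Type*} [CompleteLattice L] (mul : L → L → L) : Prop :=
  (∀ a b c, mul (mul a b) c = mul a (mul b c)) ∧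
  (∀ (s : Set L) (b : L), mul (sSup s) b = ⨆ a ∈ s, mul a b) ∧
  (∀ (a : L) (s : Set L), mul a (sSup s) = ⨆ b ∈ s, mul a b) ∧
  (∀ a, mul ⊤ a = a) ∧ (∀ a, mul a ⊤ = a)

/-- Composition `R ⊛ Q` of `L`-fuzzy ambiguous representations w.r.t. a quantale
multiplication `mul` on `L`. -/
def lComp {S₁ S₂ S₃ L : Type*} [PartialOrder S₃] [CompleteLattice L] (mul : L → L → L)
    (R : Set (S₁ × S₂ × L)) (Q : Set (S₂ × S₃ × L)) : Set (S₁ × S₃ × L) :=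
  {p : S₁ × S₃ × L | ∀ z' : S₃, WayBelow z' p.2.1 → ∀ α' : L, WayBelow α' p.2.2 →
    ∃ (n : ℕ) (y : Fin n → S₂) (β γ : Fin n → L),
      (∀ i, (p.1, y i, β i) ∈ R ∧ (y i, z', γ i) ∈ Q) ∧ α' ≤ ⨆ i, mul (β i) (γ i)}

/-!
Write `A` for the relational cut `xRQ`, a lower set. The cut `x(R;Q)` consists of the points all of
whose way-below approximants lie in `A`. Interpolation (`u ≪ v` implies `u ≪ w ≪ v` for some `w`)
makes this set Scott closed. It lies in every Scott closed set containing `A`, because each of its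
points is the directed supremum of its own approximants. So it is the Scott closure of `A`.
-/

section WayBelow

variable {α : Type*} [PartialOrder α] {x x' y y' : α}

theorem WayBelow.mono (h : WayBelow x y) (hx : x' ≤ x) (hy : y ≤ y') : WayBelow x' y' := by
  intro D hne hD a ha hya
  obtain ⟨d, hd, hxd⟩ := h D hne hD a ha (hy.trans hya)
  exact ⟨d, hd, hx.trans hxd⟩

theorem WayBelow.le (h : WayBelow x y) : x ≤ y := by
  obtain ⟨d, rfl, hxd⟩ :=
    h {y} (Set.singleton_nonempty y) (directedOn_singleton y) y isLUB_singleton le_rfl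
  exact hxd

theorem wayBelow_of_isBot (hx : IsBot x) (y : α) : WayBelow x y :=
  fun _ ⟨d, hd⟩ _ _ _ _ => ⟨d, hd, hx d⟩

end WayBelow

/-- A continuous poset: every element is the directed supremum of its way-below approximants.
Nonemptiness of the set of approximants is automatic (`IsContinuousPoset.exists_wayBelow`). -/
def IsContinuousPoset (α : Type*) [PartialOrder α] : Prop :=
  ∀ y : α, DirectedOn (· ≤ ·) {x : α | WayBelow x y} ∧ IsLUB {x : α | WayBelow x y} y

/-- The elements all of whose way-below approximants lie in `A`; over a continuous poset this is an
explicit form of the Scott closure of a lower set. -/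
def wayBelowHull {α : Type*} [PartialOrder α] (A : Set α) : Set α :=
  {z : α | ∀ z', WayBelow z' z → z' ∈ A}

section Hull

variable {α : Type*} [PartialOrder α] {A C : Set α} {x y : α}

theorem subset_wayBelowHull (hA : IsLowerSet A) : A ⊆ wayBelowHull A :=
  fun _ hz _ hz' => hA hz'.le hz

theorem isLowerSet_wayBelowHull (A : Set α) : IsLowerSet (wayBelowHull A) :=
  fun _ _ hwz hz z' hz' => hz z' (hz'.mono le_rfl hwz)

namespace IsContinuousPoset

theorem exists_wayBelow (h : IsContinuousPoset α) (y : α) : ∃ x, WayBelow x y := by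
  by_contra! hempty
  -- The supremum of the empty set is a least element, and a least element is way below everything.
  have hbot : IsBot y := fun b => (h y).2.2 fun x hx => absurd hx (hempty x)
  exact hempty y (wayBelow_of_isBot hbot y)

theorem directedOn_setOf_exists_wayBelow (h : IsContinuousPoset α) (y : α) :
    DirectedOn (· ≤ ·) {u : α | ∃ w, WayBelow u w ∧ WayBelow w y} := by
  rintro u₁ ⟨w₁, hu₁, hw₁⟩ u₂ ⟨w₂, hu₂, hw₂⟩
  obtain ⟨w, hw, hw₁w, hw₂w⟩ := (h y).1 w₁ hw₁ w₂ hw₂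
  obtain ⟨u, hu, hu₁u, hu₂u⟩ := (h w).1 u₁ (hu₁.mono le_rfl hw₁w) u₂ (hu₂.mono le_rfl hw₂w)
  exact ⟨u, ⟨w, hu, hw⟩, hu₁u, hu₂u⟩

theorem isLUB_setOf_exists_wayBelow (h : IsContinuousPoset α) (y : α) :
    IsLUB {u : α | ∃ w, WayBelow u w ∧ WayBelow w y} y := by
  constructor
  · rintro u ⟨w, hu, hw⟩
    exact hu.le.trans hw.le
  · intro b hb
    exact (h y).2.2 fun w hw => (h w).2.2 fun u hu => hb ⟨w, hu, hw⟩

theorem exists_wayBelow_wayBelow (h : IsContinuousPoset α) (hxy : WayBelow x y) :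
    ∃ w, WayBelow x w ∧ WayBelow w y := by
  have hne : {u : α | ∃ w, WayBelow u w ∧ WayBelow w y}.Nonempty := by
    obtain ⟨w, hw⟩ := h.exists_wayBelow y
    obtain ⟨u, hu⟩ := h.exists_wayBelow w
    exact ⟨u, w, hu, hw⟩
  obtain ⟨u, ⟨w, hu, hw⟩, hxu⟩ := hxy _ hne (h.directedOn_setOf_exists_wayBelow y) y
    (h.isLUB_setOf_exists_wayBelow y) le_rfl
  exact ⟨w, hu.mono hxu le_rfl, hw⟩

theorem scottClosed_wayBelowHull (h : IsContinuousPoset α) (A : Set α) :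
    ScottClosed (wayBelowHull A) := by
  refine ⟨isLowerSet_wayBelowHull A, fun D hDA hne hD a ha z hza => ?_⟩
  obtain ⟨w, hzw, hwa⟩ := h.exists_wayBelow_wayBelow hza
  obtain ⟨d, hd, hwd⟩ := hwa D hne hD a ha le_rfl
  exact hDA hd z (hzw.mono le_rfl hwd)

theorem wayBelowHull_subset (h : IsContinuousPoset α) (hC : ScottClosed C) (hAC : A ⊆ C) :
    wayBelowHull A ⊆ C :=
  fun z hz => hC.2 _ (fun z' hz' => hAC (hz z' hz')) (h.exists_wayBelow z) (h z).1 z (h z).2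

theorem wayBelowHull_eq_scottClosure (h : IsContinuousPoset α) (hA : IsLowerSet A) :
    wayBelowHull A = scottClosure A :=
  Set.Subset.antisymm
    (Set.subset_sInter fun _ hC => h.wayBelowHull_subset hC.1 hC.2)
    (Set.sInter_subset_of_mem ⟨h.scottClosed_wayBelowHull A, subset_wayBelowHull hA⟩)

end IsContinuousPoset

end Hull

section Composition

variable {S₁ S₂ S₃ : Type*} {R : Set (S₁ × S₂)} {Q : Set (S₂ × S₃)}

theorem isLowerSet_setOf_mem_relComp [LE S₃]
    (hQ : ∀ y, IsLowerSet {z : S₃ | (y, z) ∈ Q}) (x : S₁) :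
    IsLowerSet {z : S₃ | (x, z) ∈ SetRel.comp R Q} := by
  rintro z w hwz ⟨y, hxy, hyz⟩
  exact ⟨y, hxy, hQ y hwz hyz⟩

theorem nonempty_setOf_mem_relComp (hR : ∀ x, {y : S₂ | (x, y) ∈ R}.Nonempty)
    (hQ : ∀ y, {z : S₃ | (y, z) ∈ Q}.Nonempty) (x : S₁) :
    {z : S₃ | (x, z) ∈ SetRel.comp R Q}.Nonempty := by
  obtain ⟨y, hxy⟩ := hR x
  obtain ⟨z, hyz⟩ := hQ y
  exact ⟨z, y, hxy, hyz⟩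

variable [PartialOrder S₃]

theorem setOf_mem_ambComp (R : Set (S₁ × S₂)) (Q : Set (S₂ × S₃)) (x : S₁) :
    {z : S₃ | (x, z) ∈ ambComp R Q} = wayBelowHull {z : S₃ | (x, z) ∈ SetRel.comp R Q} :=
  rfl

theorem isUpperSet_setOf_mem_ambComp [LE S₁]
    (hR : ∀ y, IsUpperSet {x : S₁ | (x, y) ∈ R}) (z : S₃) :
    IsUpperSet {x : S₁ | (x, z) ∈ ambComp R Q} := by
  intro x x' hxx' hx z' hz'
  obtain ⟨y, hxy, hyz'⟩ := hx z' hz'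
  exact ⟨y, hR y hxx' hxy, hyz'⟩

theorem ambRep_ambComp [PartialOrder S₁] (h₃ : IsContinuousPoset S₃)
    (hR : ∀ x, {y : S₂ | (x, y) ∈ R}.Nonempty) (hRup : ∀ y, IsUpperSet {x : S₁ | (x, y) ∈ R})
    (hQ : ∀ y, {z : S₃ | (y, z) ∈ Q}.Nonempty) (hQlow : ∀ y, IsLowerSet {z : S₃ | (y, z) ∈ Q}) :
    AmbRep (ambComp R Q) := by
  refine ⟨fun x => ?_, isUpperSet_setOf_mem_ambComp hRup⟩
  have hsub := subset_wayBelowHull (isLowerSet_setOf_mem_relComp (R := R) hQlow x)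
  rw [setOf_mem_ambComp]
  exact ⟨(nonempty_setOf_mem_relComp hR hQ x).mono hsub, h₃.scottClosed_wayBelowHull _⟩

theorem setOf_mem_ambComp_eq_scottClosure (h₃ : IsContinuousPoset S₃)
    (hQlow : ∀ y, IsLowerSet {z : S₃ | (y, z) ∈ Q}) (x : S₁) :
    {z : S₃ | (x, z) ∈ ambComp R Q} =
      scottClosure {z : S₃ | ∃ y : S₂, (x, y) ∈ R ∧ (y, z) ∈ Q} :=
  (setOf_mem_ambComp R Q x).trans
    (h₃.wayBelowHull_eq_scottClosure (isLowerSet_setOf_mem_relComp hQlow x))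

end Composition

theorem stmt9_general {S₁ S₂ S₃ : Type*} [PartialOrder S₁] [PartialOrder S₃]
    (h₃ : IsContinuousPoset S₃) (R : Set (S₁ × S₂)) (Q : Set (S₂ × S₃))
    (hR : ∀ x, {y : S₂ | (x, y) ∈ R}.Nonempty) (hRup : ∀ y, IsUpperSet {x : S₁ | (x, y) ∈ R})
    (hQ : ∀ y, {z : S₃ | (y, z) ∈ Q}.Nonempty) (hQlow : ∀ y, IsLowerSet {z : S₃ | (y, z) ∈ Q}) :
    AmbRep (ambComp R Q) ∧
    ∀ x : S₁, {z : S₃ | (x, z) ∈ ambComp R Q} =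
      scottClosure {z : S₃ | ∃ y : S₂, (x, y) ∈ R ∧ (y, z) ∈ Q} :=
  ⟨ambRep_ambComp h₃ hR hRup hQ hQlow, setOf_mem_ambComp_eq_scottClosure h₃ hQlow⟩

/-- The composition `R;Q` of ambiguous representations is an ambiguous
representation, and `x(R;Q)` is the Scott closure of
`xRQ = {z : ∃ y, (x,y) ∈ R ∧ (y,z) ∈ Q}` for every `x`. -/
theorem stmt9 {S₁ S₂ S₃ : Type*}
    [SemilatticeInf S₁] [OrderBot S₁] [SemilatticeInf S₂] [OrderBot S₂]
    [SemilatticeInf S₃] [OrderBot S₃]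
    (h₁ : IsContinuousSemilattice S₁) (h₂ : IsContinuousSemilattice S₂)
    (h₃ : IsContinuousSemilattice S₃)
    (R : Set (S₁ × S₂)) (Q : Set (S₂ × S₃)) (hR : AmbRep R) (hQ : AmbRep Q) :
    AmbRep (ambComp R Q) ∧
    ∀ x : S₁, {z : S₃ | (x, z) ∈ ambComp R Q} =
      scottClosure {z : S₃ | ∃ y : S₂, (x, y) ∈ R ∧ (y, z) ∈ Q} :=
  stmt9_general h₃.2 R Q (fun x => (hR.1 x).1) hR.2 (fun y => (hQ.1 y).1) fun y => (hQ.1 y).2.1
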